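/- Let R be a commutative ring and P, Q finitely generated projective R-modules. There is a natural filtration 0 ⊆ M_{(3)} ⊆ M_{(2,1)} ⊆ Sym^3(P ⊗ Q), where M_{(3)} is the image of the determinant map Λ^3 P ⊗ Λ^3 Q → Sym^3(P ⊗ Q), such that there are short exact sequences 0 → Λ^3 P ⊗ Λ^3 Q → M_{(2,1)} → L^3_1 P ⊗ L^3_1 Q → 0 and 0 → M_{(2,1)} → Sym^3(P ⊗ Q) → Sym^3 P ⊗ Sym^3 Q → 0. -/

import Mathlib

open TensorProduct

open TensorProduct

section SymLib
variable (R : Type*) [CommRing R]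

/-- Relations defining the second symmetric power. -/
def sq2 (M : Type*) [AddCommGroup M] [Module R M] : Submodule R (M ⊗[R] M) :=
  Submodule.span R {x | ∃ a b : M, x = a ⊗ₜ[R] b - b ⊗ₜ[R] a}

/-- The second symmetric power. -/
abbrev SymSq (M : Type*) [AddCommGroup M] [Module R M] := (M ⊗[R] M) ⧸ sq2 R M

/-- Relations defining the third symmetric power. -/
def sq3 (M : Type*) [AddCommGroup M] [Module R M] : Submodule R (M ⊗[R] (M ⊗[R] M)) :=
  Submodule.span R
    ({x | ∃ a b c : M, x = a ⊗ₜ[R] (b ⊗ₜ[R] c) - b ⊗ₜ[R] (a ⊗ₜ[R] c)} ∪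
     {x | ∃ a b c : M, x = a ⊗ₜ[R] (b ⊗ₜ[R] c) - a ⊗ₜ[R] (c ⊗ₜ[R] b)})

/-- The third symmetric power. -/
abbrev SymCube (M : Type*) [AddCommGroup M] [Module R M] := (M ⊗[R] (M ⊗[R] M)) ⧸ sq3 R M

variable {M N : Type*} [AddCommGroup M] [Module R M] [AddCommGroup N] [Module R N]

/-- Multiplication by `v` as a map `Sym² M → Sym³ M`. -/
noncomputable def symMulAux (v : M) : SymSq R M →ₗ[R] SymCube R M :=
  Submodule.liftQ _ ((sq3 R M).mkQ ∘ₗ TensorProduct.mk R M (M ⊗[R] M) v) (by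
    rw [sq2, Submodule.span_le]
    rintro x ⟨a, b, rfl⟩
    simp only [SetLike.mem_coe, LinearMap.mem_ker, LinearMap.comp_apply,
      TensorProduct.mk_apply, map_sub, tmul_sub]
    rw [← map_sub, Submodule.mkQ_apply, Submodule.Quotient.mk_eq_zero]
    exact Submodule.subset_span (Or.inr ⟨v, a, b, rfl⟩))

lemma symMulAux_mk (v : M) (x : M ⊗[R] M) :
    symMulAux R v (Submodule.Quotient.mk x) = Submodule.Quotient.mk (v ⊗ₜ[R] x) := rfl

/-- The multiplication `M ⊗ Sym² M → Sym³ M` as a bilinear map. -/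
noncomputable def symMulBil : M →ₗ[R] SymSq R M →ₗ[R] SymCube R M where
  toFun := symMulAux R
  map_add' v w := by
    refine LinearMap.ext fun x => ?_
    obtain ⟨y, rfl⟩ := Submodule.Quotient.mk_surjective _ x
    simp [symMulAux_mk, add_tmul, Submodule.Quotient.mk_add]
  map_smul' r v := by
    refine LinearMap.ext fun x => ?_
    obtain ⟨y, rfl⟩ := Submodule.Quotient.mk_surjective _ x
    simp only [symMulAux_mk, RingHom.id_apply, LinearMap.smul_apply]
    rw [← Submodule.Quotient.mk_smul, smul_tmul']

/-- The multiplication map `M ⊗ Sym² M → Sym³ M`. -/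
noncomputable def symMul : M ⊗[R] SymSq R M →ₗ[R] SymCube R M :=
  TensorProduct.lift (symMulBil R)

lemma symMul_tmul (v : M) (x : M ⊗[R] M) :
    symMul R (v ⊗ₜ[R] (Submodule.Quotient.mk x)) = Submodule.Quotient.mk (v ⊗ₜ[R] x) := rfl

/-- The Schur functor `L³₁`, the kernel of the multiplication `M ⊗ Sym² M → Sym³ M`. -/
noncomputable def SchurL31 : Submodule R (M ⊗[R] SymSq R M) := LinearMap.ker (symMul R)

variable {R}

/-- Functoriality of `Sym²`. -/
noncomputable def symSqMap (f : M →ₗ[R] N) : SymSq R M →ₗ[R] SymSq R N :=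
  Submodule.mapQ _ _ (TensorProduct.map f f) (by
    rw [sq2, Submodule.span_le]
    rintro x ⟨a, b, rfl⟩
    simp only [SetLike.mem_coe, Submodule.mem_comap, map_sub, TensorProduct.map_tmul]
    exact Submodule.subset_span ⟨f a, f b, rfl⟩)

/-- Functoriality of `Sym³`. -/
noncomputable def symCubeMap (f : M →ₗ[R] N) : SymCube R M →ₗ[R] SymCube R N :=
  Submodule.mapQ _ _ (TensorProduct.map f (TensorProduct.map f f)) (by
    rw [sq3, Submodule.span_le]
    rintro x (⟨a, b, c, rfl⟩ | ⟨a, b, c, rfl⟩) <;>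
      simp only [SetLike.mem_coe, Submodule.mem_comap, map_sub, TensorProduct.map_tmul]
    · exact Submodule.subset_span (Or.inl ⟨f a, f b, f c, rfl⟩)
    · exact Submodule.subset_span (Or.inr ⟨f a, f b, f c, rfl⟩))

end SymLib

section SymLib2
variable {R : Type*} [CommRing R]
variable {M N : Type*} [AddCommGroup M] [Module R M] [AddCommGroup N] [Module R N]

lemma symMul_natural (f : M →ₗ[R] N) :
    symCubeMap f ∘ₗ symMul R = symMul R ∘ₗ TensorProduct.map f (symSqMap f) := by
  apply TensorProduct.ext'
  intro v x
  obtain ⟨y, rfl⟩ := Submodule.Quotient.mk_surjective _ x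
  simp only [LinearMap.comp_apply, TensorProduct.map_tmul]
  rw [symMul_tmul]
  show Submodule.Quotient.mk ((TensorProduct.map f (TensorProduct.map f f)) (v ⊗ₜ[R] y)) = _
  rw [TensorProduct.map_tmul,
    show symSqMap f (Submodule.Quotient.mk y) = Submodule.Quotient.mk (TensorProduct.map f f y) from rfl,
    symMul_tmul]

/-- Functoriality of the Schur functor `L³₁`. -/
noncomputable def schurL31Map (f : M →ₗ[R] N) : SchurL31 (R := R) (M := M) →ₗ[R] SchurL31 (R := R) (M := N) :=
  LinearMap.restrict (TensorProduct.map f (symSqMap f)) (fun x hx => by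
    have := congrFun (congrArg DFunLike.coe (symMul_natural f)) x
    simp only [LinearMap.comp_apply] at this
    simp only [SchurL31, LinearMap.mem_ker] at hx ⊢
    rw [← this, hx, map_zero])

end SymLib2

section Cauchy
variable (R : Type u) [CommRing R]
variable (P Q : Type u) [AddCommGroup P] [Module R P] [AddCommGroup Q] [Module R Q]

/-- The value of the determinant map `Λ³P ⊗ Λ³Q → Sym³(P ⊗ Q)` on
`(p₀ ∧ p₁ ∧ p₂) ⊗ (q₀ ∧ q₁ ∧ q₂)`: the 3×3 determinant of the matrix `(pᵢ ⊗ qⱼ)`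
computed in `Sym³(P ⊗ Q)`. -/
noncomputable def detElem (p : Fin 3 → P) (q : Fin 3 → Q) : SymCube R (P ⊗[R] Q) :=
  Submodule.Quotient.mk (∑ σ : Equiv.Perm (Fin 3), (Equiv.Perm.sign σ : ℤ) •
    ((p 0 ⊗ₜ[R] q (σ 0)) ⊗ₜ[R] ((p 1 ⊗ₜ[R] q (σ 1)) ⊗ₜ[R] (p 2 ⊗ₜ[R] q (σ 2)))))

/-- The filtration step `M₍₃₎(Sym³(P ⊗ Q))`: the image of the determinant map
`Λ³P ⊗ Λ³Q → Sym³(P ⊗ Q)`, i.e. the span of all `3×3` determinants. -/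
noncomputable def M3 : Submodule R (SymCube R (P ⊗[R] Q)) :=
  Submodule.span R {x | ∃ p : Fin 3 → P, ∃ q : Fin 3 → Q, x = detElem R P Q p q}

/-- The value of the map `Λ²P ⊗ P ⊗ Λ²Q ⊗ Q → Sym³(P ⊗ Q)`,
`(p₁ ∧ p₂) ⊗ p₃ ⊗ (q₁ ∧ q₂) ⊗ q₃ ↦ det(pᵢ ⊗ qⱼ)_{i,j ≤ 2} · (p₃ ⊗ q₃)`. -/
noncomputable def det2Elem (p1 p2 p3 : P) (q1 q2 q3 : Q) : SymCube R (P ⊗[R] Q) :=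
  Submodule.Quotient.mk
    ((p1 ⊗ₜ[R] q1) ⊗ₜ[R] ((p2 ⊗ₜ[R] q2) ⊗ₜ[R] (p3 ⊗ₜ[R] q3))
      - (p1 ⊗ₜ[R] q2) ⊗ₜ[R] ((p2 ⊗ₜ[R] q1) ⊗ₜ[R] (p3 ⊗ₜ[R] q3)))

/-- The filtration step `M₍₂,₁₎(Sym³(P ⊗ Q))`: `M₍₃₎` together with the image of
`Λ²P ⊗ P ⊗ Λ²Q ⊗ Q → Sym³(P ⊗ Q)`. -/
noncomputable def M21 : Submodule R (SymCube R (P ⊗[R] Q)) :=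
  M3 R P Q ⊔ Submodule.span R
    {x | ∃ p1 p2 p3 : P, ∃ q1 q2 q3 : Q, x = det2Elem R P Q p1 p2 p3 q1 q2 q3}

end Cauchy

/-!
Each graded piece is presented by an explicit map whose left inverse comes from a symmetric
construction on `(P ⊗ Q)^{⊗3}`.

* If `r : P³ → Λ³P` and `s : Q³ → Λ³Q` are trilinear maps whose alternatizations are the universal
  ones, then `∑_σ r(p ∘ σ) ⊗ s(q ∘ σ)` is a left inverse of the determinant map. Such `r` exist for
  a free module (keep only the strictly increasing words in the basis), hence for a projective one.
* Expanding a `3 × 3` determinant cyclically into `2 × 2` minors, along `p` or along `q`, shows that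
  modulo `M₍₃₎` the minors factor through `(Λ²P ⊗ P) / Λ³P ⊗ (Λ²Q ⊗ Q) / Λ³Q`. Followed by
  polarization this becomes the tensor product of the Koszul maps
  `(a ∧ b) ⊗ c ↦ a ⊗ bc - b ⊗ ac`, which are split injections with image `L³₁`.
* Modulo `2 × 2` minors, `(p₁ ⊗ q₁)(p₂ ⊗ q₂)(p₃ ⊗ q₃)` depends only on `p₁p₂p₃` and `q₁q₂q₃`.
-/

section ExteriorPower

variable {R : Type*} [CommRing R]
variable {M N X : Type*} [AddCommGroup M] [Module R M] [AddCommGroup N] [Module R N]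
  [AddCommGroup X] [Module R X] {m n : ℕ}

/-- The linear map on `⋀ᵐM ⊗ ⋀ⁿN` induced by a form which is alternating in each of two groups of
variables; the form is given by its two families of partial maps `f p` and `g q`. -/
noncomputable def exteriorPowerLift₂ (f : (Fin m → M) → N [⋀^Fin n]→ₗ[R] X)
    (g : (Fin n → N) → M [⋀^Fin m]→ₗ[R] X) (h : ∀ p q, f p q = g q p) :
    (⋀[R]^m M) ⊗[R] (⋀[R]^n N) →ₗ[R] X :=
  TensorProduct.lift <| exteriorPower.alternatingMapLinearEquiv
    { toFun p := exteriorPower.alternatingMapLinearEquiv (f p)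
      map_update_add' p i a b := by ext q; simp [h]
      map_update_smul' p i r a := by ext q; simp [h]
      map_eq_zero_of_eq' p i j hij hne := by ext q; simp [h, (g q).map_eq_zero_of_eq p hij hne] }

lemma exteriorPowerLift₂_ιMulti_tmul_ιMulti (f : (Fin m → M) → N [⋀^Fin n]→ₗ[R] X)
    (g : (Fin n → N) → M [⋀^Fin m]→ₗ[R] X) (h : ∀ p q, f p q = g q p)
    (p : Fin m → M) (q : Fin n → N) :
    exteriorPowerLift₂ f g h (exteriorPower.ιMulti R m p ⊗ₜ[R] exteriorPower.ιMulti R n q) =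
      f p q := by
  simp [exteriorPowerLift₂]

lemma exteriorPower_tensorProduct_ext {f g : (⋀[R]^m M) ⊗[R] (⋀[R]^n N) →ₗ[R] X}
    (h : ∀ p q, f (exteriorPower.ιMulti R m p ⊗ₜ[R] exteriorPower.ιMulti R n q) =
      g (exteriorPower.ιMulti R m p ⊗ₜ[R] exteriorPower.ιMulti R n q)) : f = g := by
  ext p q
  exact h p q

lemma exists_alternatization_eq_ιMulti_of_basis {ι : Type*} (b : Module.Basis ι R M) (n : ℕ) :
    ∃ r : MultilinearMap R (fun _ : Fin n ↦ M) (⋀[R]^n M),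
      MultilinearMap.alternatization r = exteriorPower.ιMulti R n := by
  classical
  let : LinearOrder ι := linearOrderOfSTO WellOrderingRel
  let r : MultilinearMap R (fun _ : Fin n ↦ M) (⋀[R]^n M) := PiTensorProduct.lift.symm <|
    (Basis.piTensorProduct fun _ ↦ b).constr R fun v ↦
      if StrictMono v then exteriorPower.ιMulti R n (b ∘ v) else 0
  have hr (v : Fin n → ι) :
      r (b ∘ v) = if StrictMono v then exteriorPower.ιMulti R n (b ∘ v) else 0 := by
    have hv : PiTensorProduct.tprod R (b ∘ v) = Basis.piTensorProduct (fun _ ↦ b) v :=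
      (Basis.piTensorProduct_apply _ _).symm
    change (Basis.piTensorProduct fun _ ↦ b).constr R _ (PiTensorProduct.tprod R (b ∘ v)) = _
    rw [hv, Module.Basis.constr_basis]
  refine ⟨r, Module.Basis.ext_alternating b fun v hv ↦ ?_⟩
  have hsort (σ : Equiv.Perm (Fin n)) (hσ : StrictMono (v ∘ σ)) : σ = Tuple.sort v :=
    Tuple.eq_sort_iff.2 ⟨hσ.monotone, fun i j hij h ↦ absurd h (hσ hij).ne⟩
  have hmono : StrictMono (v ∘ Tuple.sort v) :=
    (Tuple.monotone_sort v).strictMono_of_injective (hv.comp (Tuple.sort v).injective)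
  calc MultilinearMap.alternatization r (b ∘ v)
    _ = ∑ σ : Equiv.Perm (Fin n), Equiv.Perm.sign σ • r (b ∘ (v ∘ σ)) := by
      rw [MultilinearMap.alternatization_apply]; rfl
    _ = Equiv.Perm.sign (Tuple.sort v) • r (b ∘ (v ∘ Tuple.sort v)) := by
      refine Finset.sum_eq_single _ (fun σ _ hσ ↦ ?_) (by simp)
      rw [hr, if_neg (mt (hsort σ) hσ), smul_zero]
    _ = Equiv.Perm.sign (Tuple.sort v) • exteriorPower.ιMulti R n ((b ∘ v) ∘ Tuple.sort v) := by
      rw [hr, if_pos hmono, Function.comp_assoc]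
    _ = exteriorPower.ιMulti R n (b ∘ v) := by
      rw [AlternatingMap.map_perm, smul_smul, Int.units_mul_self, one_smul]

lemma exists_alternatization_eq_ιMulti [Module.Projective R M] (n : ℕ) :
    ∃ r : MultilinearMap R (fun _ : Fin n ↦ M) (⋀[R]^n M),
      MultilinearMap.alternatization r = exteriorPower.ιMulti R n := by
  obtain ⟨s, hs⟩ := Module.projective_def'.1 ‹Module.Projective R M›
  obtain ⟨r, hr⟩ :=
    exists_alternatization_eq_ιMulti_of_basis (Finsupp.basisSingleOne (R := R) (ι := M)) n
  set π := Finsupp.linearCombination R (id : M → M)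
  refine ⟨(exteriorPower.map n π).compMultilinearMap (r.compLinearMap fun _ ↦ s), ?_⟩
  ext v : 1
  calc MultilinearMap.alternatization
        ((exteriorPower.map n π).compMultilinearMap (r.compLinearMap fun _ ↦ s)) v
    _ = exteriorPower.map n π (MultilinearMap.alternatization r (s ∘ v)) := by
      simp [MultilinearMap.alternatization_apply, Function.comp_def, map_sum, Units.smul_def]
    _ = exteriorPower.ιMulti R n ((π ∘ₗ s) ∘ v) := by
      rw [hr, exteriorPower.map_apply_ιMulti]; rfl
    _ = exteriorPower.ιMulti R n v := by rw [hs]; rfl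

end ExteriorPower

section TensorCube

variable {R : Type*} [CommRing R]
variable {M N X : Type*} [AddCommGroup M] [Module R M] [AddCommGroup N] [Module R N]
  [AddCommGroup X] [Module R X]

variable (R M) in
/-- The universal trilinear map `M³ → M ⊗ (M ⊗ M)`, its arguments being indexed by `Fin 3`. -/
noncomputable def tensorCube : MultilinearMap R (fun _ : Fin 3 ↦ M) (M ⊗[R] (M ⊗[R] M)) :=
  MultilinearMap.mk' (fun p ↦ p 0 ⊗ₜ[R] (p 1 ⊗ₜ[R] p 2))
    (fun p i a b ↦ by
      fin_cases i <;> simp [Function.update, TensorProduct.add_tmul, TensorProduct.tmul_add])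
    (fun p i r a ↦ by
      fin_cases i <;>
        simp [Function.update, ← TensorProduct.smul_tmul', TensorProduct.tmul_smul])

/-- The linear map on `M ⊗ (M ⊗ M)` induced by a trilinear map. -/
noncomputable def liftTensorCube (f : MultilinearMap R (fun _ : Fin 3 ↦ M) N) :
    M ⊗[R] (M ⊗[R] M) →ₗ[R] N :=
  TensorProduct.lift <| (TensorProduct.lift.equiv (.id R) M M N).toLinearMap ∘ₗ
    LinearMap.llcomp R M _ _
      (MultilinearMap.ofSubsingletonₗ R R M N (0 : Fin 1)).symm.toLinearMap ∘ₗ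
    (multilinearCurryLeftEquiv R (fun _ : Fin 2 ↦ M) N).toLinearMap ∘ₗ f.curryLeft

@[simp]
lemma liftTensorCube_tmul (f : MultilinearMap R (fun _ : Fin 3 ↦ M) N) (a b c : M) :
    liftTensorCube f (a ⊗ₜ[R] (b ⊗ₜ[R] c)) = f ![a, b, c] := by
  refine congrArg f (funext fun i ↦ ?_)
  fin_cases i <;> rfl

lemma quotTensorCube_ext {A : Submodule R (M ⊗[R] (M ⊗[R] M))}
    {B : Submodule R (N ⊗[R] (N ⊗[R] N))}
    {f g : ((M ⊗[R] (M ⊗[R] M)) ⧸ A) ⊗[R] ((N ⊗[R] (N ⊗[R] N)) ⧸ B) →ₗ[R] X}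
    (h : ∀ (a b c : M) (x y z : N),
      f (A.mkQ (a ⊗ₜ (b ⊗ₜ c)) ⊗ₜ B.mkQ (x ⊗ₜ (y ⊗ₜ z))) =
        g (A.mkQ (a ⊗ₜ (b ⊗ₜ c)) ⊗ₜ B.mkQ (x ⊗ₜ (y ⊗ₜ z)))) : f = g := by
  have hcomp : f ∘ₗ TensorProduct.map A.mkQ B.mkQ = g ∘ₗ TensorProduct.map A.mkQ B.mkQ := by
    ext a b c x y z
    exact h a b c x y z
  exact LinearMap.cancel_right (TensorProduct.map_surjective A.mkQ_surjective B.mkQ_surjective)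
    |>.1 hcomp

end TensorCube

section SymmetricPowers

variable {R : Type*} [CommRing R]
variable {M N X : Type*} [AddCommGroup M] [Module R M] [AddCommGroup N] [Module R N]
  [AddCommGroup X] [Module R X]

namespace SymSq

variable (R) in
/-- The product `ab` in `Sym² M`. -/
def mul (a b : M) : SymSq R M := Submodule.Quotient.mk (a ⊗ₜ[R] b)

protected lemma mul_comm (a b : M) : mul R a b = mul R b a :=
  (Submodule.Quotient.eq _).2 (Submodule.subset_span ⟨a, b, rfl⟩)

lemma exists_linearMap_of_basis {ι : Type*} (b : Module.Basis ι R M) (g : ι → ι → N)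
    (hg : ∀ i j, g i j = g j i) :
    ∃ f : SymSq R M →ₗ[R] N, ∀ i j, f (mul R (b i) (b j)) = g i j := by
  set B : M →ₗ[R] M →ₗ[R] N := b.constr R fun i ↦ b.constr R (g i)
  have hB (i j : ι) : B (b i) (b j) = g i j := by simp [B]
  have hsymm : B = B.flip := b.ext fun i ↦ b.ext fun j ↦ by simp [hB, hg i j]
  refine ⟨Submodule.liftQ _ (TensorProduct.lift B) (Submodule.span_le.2 ?_), hB⟩
  rintro _ ⟨x, y, rfl⟩
  simp [LinearMap.congr_fun₂ hsymm x y]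

end SymSq

namespace SymCube

variable (R) in
/-- The product `abc` in `Sym³ M`. -/
def mul (a b c : M) : SymCube R M := Submodule.Quotient.mk (a ⊗ₜ[R] (b ⊗ₜ[R] c))

lemma mul_swap₁₂ (a b c : M) : mul R a b c = mul R b a c :=
  (Submodule.Quotient.eq _).2 (Submodule.subset_span (Or.inl ⟨a, b, c, rfl⟩))

lemma mul_swap₂₃ (a b c : M) : mul R a b c = mul R a c b :=
  (Submodule.Quotient.eq _).2 (Submodule.subset_span (Or.inr ⟨a, b, c, rfl⟩))

lemma mul_rotate (a b c : M) : mul R a b c = mul R b c a := by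
  rw [mul_swap₁₂, mul_swap₂₃]

variable (R M) in
/-- The product of three elements in `Sym³ M` as a multilinear map. -/
noncomputable def mulMulti : MultilinearMap R (fun _ : Fin 3 ↦ M) (SymCube R M) :=
  (sq3 R M).mkQ.compMultilinearMap (tensorCube R M)

lemma mulMulti_comp_perm (v : Fin 3 → M) (σ : Equiv.Perm (Fin 3)) :
    mulMulti R M (v ∘ σ) = mulMulti R M v := by
  have hσ : σ ∈ Submonoid.closure
      (Set.range fun i : Fin 2 ↦ Equiv.swap i.castSucc i.succ) := by
    rw [Equiv.Perm.mclosure_swap_castSucc_succ]; trivial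
  induction hσ using Submonoid.closure_induction generalizing v with
  | mem _ h =>
    obtain ⟨i, rfl⟩ := h
    fin_cases i
    · exact mul_swap₁₂ (v 1) (v 0) (v 2)
    · exact mul_swap₂₃ (v 0) (v 2) (v 1)
  | one => rfl
  | mul σ τ _ _ hσ hτ => rw [Equiv.Perm.coe_mul, ← Function.comp_assoc, hτ, hσ]

end SymCube

variable (R M N) in
/-- The rearrangement `(M ⊗ N)^{⊗3} ≃ M^{⊗3} ⊗ N^{⊗3}`. -/
noncomputable def tensorCubeTensorEquiv : (M ⊗[R] N) ⊗[R] ((M ⊗[R] N) ⊗[R] (M ⊗[R] N)) ≃ₗ[R]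
    (M ⊗[R] (M ⊗[R] M)) ⊗[R] (N ⊗[R] (N ⊗[R] N)) :=
  (TensorProduct.tensorTensorTensorComm R M N M N).lTensor (M ⊗[R] N) ≪≫ₗ
    TensorProduct.tensorTensorTensorComm R M N (M ⊗[R] M) (N ⊗[R] N)

namespace SymCube

variable (R M N) in
/-- The multiplication `M^{⊗3} × N^{⊗3} → Sym³(M ⊗ N)`. -/
noncomputable def tensorMul :
    M ⊗[R] (M ⊗[R] M) →ₗ[R] N ⊗[R] (N ⊗[R] N) →ₗ[R] SymCube R (M ⊗[R] N) :=
  TensorProduct.curry ((sq3 R _).mkQ ∘ₗ (tensorCubeTensorEquiv R M N).symm.toLinearMap)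

/-- The linear map on `Sym³(M ⊗ N)` induced by a map on `M^{⊗3} ⊗ N^{⊗3}` which is invariant under
simultaneous transpositions of the factors. -/
noncomputable def liftTensor (F : (M ⊗[R] (M ⊗[R] M)) ⊗[R] (N ⊗[R] (N ⊗[R] N)) →ₗ[R] X)
    (h₁₂ : ∀ (a b c : M) (x y z : N), F ((a ⊗ₜ (b ⊗ₜ c)) ⊗ₜ (x ⊗ₜ (y ⊗ₜ z))) =
      F ((b ⊗ₜ (a ⊗ₜ c)) ⊗ₜ (y ⊗ₜ (x ⊗ₜ z))))
    (h₂₃ : ∀ (a b c : M) (x y z : N), F ((a ⊗ₜ (b ⊗ₜ c)) ⊗ₜ (x ⊗ₜ (y ⊗ₜ z))) =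
      F ((a ⊗ₜ (c ⊗ₜ b)) ⊗ₜ (x ⊗ₜ (z ⊗ₜ y)))) :
    SymCube R (M ⊗[R] N) →ₗ[R] X :=
  Submodule.liftQ _ (F ∘ₗ (tensorCubeTensorEquiv R M N).toLinearMap) (by
    set G := F ∘ₗ (tensorCubeTensorEquiv R M N).toLinearMap
    have hG₁₂ : G = G ∘ₗ (TensorProduct.leftComm R _ _ _).toLinearMap := by
      ext a x b y c z
      exact h₁₂ a b c x y z
    have hG₂₃ : G = G ∘ₗ ((TensorProduct.comm R _ _).lTensor _).toLinearMap := by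
      ext a x b y c z
      exact h₂₃ a b c x y z
    refine Submodule.span_le.2 ?_
    rintro _ (⟨u, v, w, rfl⟩ | ⟨u, v, w, rfl⟩)
    · simpa [sub_eq_zero] using LinearMap.congr_fun hG₁₂ (u ⊗ₜ (v ⊗ₜ w))
    · simpa [sub_eq_zero] using LinearMap.congr_fun hG₂₃ (u ⊗ₜ (v ⊗ₜ w)))

lemma liftTensor_mul_tmul (F : (M ⊗[R] (M ⊗[R] M)) ⊗[R] (N ⊗[R] (N ⊗[R] N)) →ₗ[R] X) (h₁₂ h₂₃)
    (a b c : M) (x y z : N) :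
    liftTensor F h₁₂ h₂₃ (mul R (a ⊗ₜ x) (b ⊗ₜ y) (c ⊗ₜ z)) =
      F ((a ⊗ₜ (b ⊗ₜ c)) ⊗ₜ (x ⊗ₜ (y ⊗ₜ z))) := rfl

end SymCube

end SymmetricPowers

section Determinants

lemma alternatization_fin_three {R M N : Type*} [Semiring R] [AddCommMonoid M] [Module R M]
    [AddCommGroup N] [Module R N] (f : MultilinearMap R (fun _ : Fin 3 ↦ M) N) (v : Fin 3 → M) :
    MultilinearMap.alternatization f v = f ![v 0, v 1, v 2] - f ![v 1, v 0, v 2] +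
      (f ![v 1, v 2, v 0] - f ![v 2, v 1, v 0]) + (f ![v 2, v 0, v 1] - f ![v 0, v 2, v 1]) := by
  have huniv : (Finset.univ : Finset (Equiv.Perm (Fin 3))) =
      {1, Equiv.swap 0 1, finRotate 3, Equiv.swap 0 2, (finRotate 3)⁻¹, Equiv.swap 1 2} := by
    decide
  have hcomp (σ : Equiv.Perm (Fin 3)) : (fun i ↦ v (σ i)) = ![v (σ 0), v (σ 1), v (σ 2)] := by
    ext i; fin_cases i <;> rfl
  rw [MultilinearMap.alternatization_apply, huniv]
  repeat rw [Finset.sum_insert (by decide)]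
  rw [Finset.sum_singleton]
  have hswap : Equiv.Perm.sign (Equiv.swap (0 : Fin 3) 1) = -1 ∧
      Equiv.Perm.sign (Equiv.swap (0 : Fin 3) 2) = -1 ∧
      Equiv.Perm.sign (Equiv.swap (1 : Fin 3) 2) = -1 := by decide
  have hrotate : Equiv.Perm.sign (finRotate 3) = 1 := by decide
  simp only [MultilinearMap.domDomCongr_apply, hcomp, Equiv.Perm.sign_one, Equiv.Perm.sign_inv,
    hrotate, hswap, one_smul, Units.neg_smul]
  change f ![v 0, v 1, v 2] + (-f ![v 1, v 0, v 2] + (f ![v 1, v 2, v 0] + (-f ![v 2, v 1, v 0] +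
    (f ![v 2, v 0, v 1] + -f ![v 0, v 2, v 1])))) = _
  abel

lemma vecCons₃_comp_swap₀₁ {M : Type*} (a b c : M) :
    ![a, b, c] ∘ Equiv.swap (0 : Fin 3) 1 = ![b, a, c] := by
  ext i; fin_cases i <;> rfl

lemma vecCons₃_comp_swap₁₂ {M : Type*} (a b c : M) :
    ![a, b, c] ∘ Equiv.swap (1 : Fin 3) 2 = ![a, c, b] := by
  ext i; fin_cases i <;> rfl

variable {R P Q : Type u} [CommRing R] [AddCommGroup P] [Module R P] [AddCommGroup Q] [Module R Q]

open SymCube (mul mulMulti)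

lemma det2Elem_eq_mul_sub_mul (a b c : P) (x y z : Q) : det2Elem R P Q a b c x y z =
    mul R (a ⊗ₜ x) (b ⊗ₜ y) (c ⊗ₜ z) - mul R (a ⊗ₜ y) (b ⊗ₜ x) (c ⊗ₜ z) := rfl

lemma det2Elem_self_left (a c : P) (x y z : Q) : det2Elem R P Q a a c x y z = 0 :=
  sub_eq_zero.2 (SymCube.mul_swap₁₂ (R := R) (a ⊗ₜ x) (a ⊗ₜ y) (c ⊗ₜ z))

lemma det2Elem_self_right (a b c : P) (x z : Q) : det2Elem R P Q a b c x x z = 0 :=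
  sub_self (mul R (a ⊗ₜ x) (b ⊗ₜ x) (c ⊗ₜ z))

lemma detElem_eq_sum_mulMulti (p : Fin 3 → P) (q : Fin 3 → Q) : detElem R P Q p q =
    ∑ σ : Equiv.Perm (Fin 3), Equiv.Perm.sign σ • mulMulti R _ fun i ↦ p i ⊗ₜ q (σ i) :=
  map_sum (sq3 R (P ⊗[R] Q)).mkQ _ _

lemma detElem_eq_alternatization_right (p : Fin 3 → P) (q : Fin 3 → Q) : detElem R P Q p q =
    MultilinearMap.alternatization
      ((mulMulti R _).compLinearMap fun i ↦ TensorProduct.mk R P Q (p i)) q :=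
  detElem_eq_sum_mulMulti p q

lemma detElem_eq_alternatization_left (p : Fin 3 → P) (q : Fin 3 → Q) : detElem R P Q p q =
    MultilinearMap.alternatization
      ((mulMulti R _).compLinearMap fun i ↦ (TensorProduct.mk R P Q).flip (q i)) p := by
  rw [detElem_eq_sum_mulMulti, MultilinearMap.alternatization_apply,
    ← Equiv.sum_comp (Equiv.inv _)]
  refine Finset.sum_congr rfl fun σ _ ↦ ?_
  rw [Equiv.inv_apply, Equiv.Perm.sign_inv, ← SymCube.mulMulti_comp_perm _ σ]
  simp [Function.comp_def]

lemma detElem_eq_sum_det2Elem_right (p : Fin 3 → P) (q : Fin 3 → Q) :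
    detElem R P Q p q = det2Elem R P Q (p 0) (p 1) (p 2) (q 0) (q 1) (q 2) +
      det2Elem R P Q (p 0) (p 1) (p 2) (q 1) (q 2) (q 0) +
      det2Elem R P Q (p 0) (p 1) (p 2) (q 2) (q 0) (q 1) := by
  rw [detElem_eq_alternatization_right, alternatization_fin_three]
  rfl

lemma detElem_eq_sum_det2Elem_left (p : Fin 3 → P) (q : Fin 3 → Q) :
    detElem R P Q p q = det2Elem R P Q (p 0) (p 1) (p 2) (q 0) (q 1) (q 2) +
      det2Elem R P Q (p 1) (p 2) (p 0) (q 0) (q 1) (q 2) +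
      det2Elem R P Q (p 2) (p 0) (p 1) (q 0) (q 1) (q 2) := by
  rw [detElem_eq_alternatization_left, alternatization_fin_three]
  simp only [det2Elem_eq_mul_sub_mul, SymCube.mul_swap₁₂ (_ ⊗ₜ q 1)]
  rfl

variable (R P Q) in
lemma M21_eq_span_det2Elem : M21 R P Q = Submodule.span R
    {x | ∃ p1 p2 p3 : P, ∃ q1 q2 q3 : Q, x = det2Elem R P Q p1 p2 p3 q1 q2 q3} := by
  rw [M21, sup_eq_right, M3, Submodule.span_le]
  rintro _ ⟨p, q, rfl⟩
  rw [detElem_eq_sum_det2Elem_right]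
  refine add_mem (add_mem ?_ ?_) ?_ <;> exact Submodule.subset_span ⟨_, _, _, _, _, _, rfl⟩

lemma det2Elem_mem_M21 (a b c : P) (x y z : Q) : det2Elem R P Q a b c x y z ∈ M21 R P Q :=
  Submodule.mem_sup_right (Submodule.subset_span ⟨a, b, c, x, y, z, rfl⟩)

lemma detElem_mem_M3 (p : Fin 3 → P) (q : Fin 3 → Q) : detElem R P Q p q ∈ M3 R P Q :=
  Submodule.subset_span ⟨p, q, rfl⟩

variable (R P Q) in
/-- The determinant map `Λ³P ⊗ Λ³Q → Sym³(P ⊗ Q)`. -/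
noncomputable def detMap : (⋀[R]^3 P) ⊗[R] (⋀[R]^3 Q) →ₗ[R] SymCube R (P ⊗[R] Q) :=
  exteriorPowerLift₂ _ _ fun p q ↦
    (detElem_eq_alternatization_right p q).symm.trans (detElem_eq_alternatization_left p q)

lemma detMap_ιMulti_tmul_ιMulti (p : Fin 3 → P) (q : Fin 3 → Q) :
    detMap R P Q (exteriorPower.ιMulti R 3 p ⊗ₜ exteriorPower.ιMulti R 3 q) = detElem R P Q p q :=
  (exteriorPowerLift₂_ιMulti_tmul_ιMulti _ _ _ p q).trans
    (detElem_eq_alternatization_right p q).symm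

variable (R P Q) in
lemma range_detMap : LinearMap.range (detMap R P Q) = M3 R P Q := by
  apply le_antisymm
  · have h : (M3 R P Q).mkQ ∘ₗ detMap R P Q = 0 := exteriorPower_tensorProduct_ext fun p q ↦ by
      simpa [detMap_ιMulti_tmul_ιMulti] using detElem_mem_M3 p q
    rw [LinearMap.range_le_iff_comap, ← (M3 R P Q).ker_mkQ, ← LinearMap.ker_comp, h,
      LinearMap.ker_zero]
  · rw [M3, Submodule.span_le]
    rintro _ ⟨p, q, rfl⟩
    exact ⟨_, detMap_ιMulti_tmul_ιMulti p q⟩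

section Symmetrization

variable {X Y : Type*} [AddCommGroup X] [Module R X] [AddCommGroup Y] [Module R Y]
  (r : MultilinearMap R (fun _ : Fin 3 ↦ P) X) (s : MultilinearMap R (fun _ : Fin 3 ↦ Q) Y)

lemma sum_tmul_comp_perm (τ : Equiv.Perm (Fin 3)) (p : Fin 3 → P) (q : Fin 3 → Q) :
    ∑ σ : Equiv.Perm (Fin 3), r (p ∘ σ) ⊗ₜ[R] s (q ∘ σ) =
      ∑ σ : Equiv.Perm (Fin 3), r ((p ∘ τ) ∘ σ) ⊗ₜ[R] s ((q ∘ τ) ∘ σ) :=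
  (Equiv.sum_comp (Equiv.mulLeft τ) fun σ ↦ r (p ∘ σ) ⊗ₜ[R] s (q ∘ σ)).symm

lemma sum_map_liftTensorCube_tmul (a b c : P) (x y z : Q) :
    (∑ σ : Equiv.Perm (Fin 3), TensorProduct.map (liftTensorCube (r.domDomCongr σ))
      (liftTensorCube (s.domDomCongr σ))) ((a ⊗ₜ (b ⊗ₜ c)) ⊗ₜ (x ⊗ₜ (y ⊗ₜ z))) =
      ∑ σ : Equiv.Perm (Fin 3), r (![a, b, c] ∘ σ) ⊗ₜ[R] s (![x, y, z] ∘ σ) := by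
  simp only [LinearMap.sum_apply, TensorProduct.map_tmul, liftTensorCube_tmul]
  rfl

/-- The linear map `(p₀ ⊗ q₀)(p₁ ⊗ q₁)(p₂ ⊗ q₂) ↦ ∑_σ r(p ∘ σ) ⊗ s(q ∘ σ)` on `Sym³(P ⊗ Q)`, used
to invert the determinant map on the left. -/
noncomputable def symmetrizedTensor : SymCube R (P ⊗[R] Q) →ₗ[R] X ⊗[R] Y :=
  SymCube.liftTensor
    (∑ σ : Equiv.Perm (Fin 3), TensorProduct.map (liftTensorCube (r.domDomCongr σ))
      (liftTensorCube (s.domDomCongr σ)))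
    (fun a b c x y z ↦ by
      simp only [sum_map_liftTensorCube_tmul]
      rw [sum_tmul_comp_perm r s (Equiv.swap 0 1), vecCons₃_comp_swap₀₁, vecCons₃_comp_swap₀₁])
    (fun a b c x y z ↦ by
      simp only [sum_map_liftTensorCube_tmul]
      rw [sum_tmul_comp_perm r s (Equiv.swap 1 2), vecCons₃_comp_swap₁₂, vecCons₃_comp_swap₁₂])

lemma symmetrizedTensor_mulMulti_tmul (p : Fin 3 → P) (q : Fin 3 → Q) :
    symmetrizedTensor r s (mulMulti R _ fun i ↦ p i ⊗ₜ q i) =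
      ∑ σ : Equiv.Perm (Fin 3), r (p ∘ σ) ⊗ₜ[R] s (q ∘ σ) := by
  have h (M : Type u) (v : Fin 3 → M) : ![v 0, v 1, v 2] = v := by
    ext i; fin_cases i <;> rfl
  refine (SymCube.liftTensor_mul_tmul _ _ _ _ _ _ _ _ _).trans ?_
  rw [sum_map_liftTensorCube_tmul, h P p, h Q q]

lemma symmetrizedTensor_detElem (p : Fin 3 → P) (q : Fin 3 → Q) :
    symmetrizedTensor r s (detElem R P Q p q) =
      MultilinearMap.alternatization r p ⊗ₜ MultilinearMap.alternatization s q := by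
  have hsum (σ : Equiv.Perm (Fin 3)) :
      ∑ τ : Equiv.Perm (Fin 3), Equiv.Perm.sign τ • (r (p ∘ σ) ⊗ₜ[R] s ((q ∘ τ) ∘ σ)) =
        ∑ τ : Equiv.Perm (Fin 3),
          (Equiv.Perm.sign σ • r (p ∘ σ)) ⊗ₜ[R] (Equiv.Perm.sign τ • s (q ∘ τ)) := by
    rw [← Equiv.sum_comp (Equiv.mulRight σ)
      fun τ ↦ (Equiv.Perm.sign σ • r (p ∘ σ)) ⊗ₜ[R] (Equiv.Perm.sign τ • s (q ∘ τ))]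
    refine Finset.sum_congr rfl fun τ _ ↦ ?_
    obtain h | h := Int.units_eq_one_or (Equiv.Perm.sign σ) <;>
      obtain h' | h' := Int.units_eq_one_or (Equiv.Perm.sign τ) <;>
      simp [h, h', TensorProduct.neg_tmul, TensorProduct.tmul_neg, Function.comp_assoc]
  calc symmetrizedTensor r s (detElem R P Q p q)
    _ = ∑ τ : Equiv.Perm (Fin 3), Equiv.Perm.sign τ •
          ∑ σ : Equiv.Perm (Fin 3), r (p ∘ σ) ⊗ₜ[R] s ((q ∘ τ) ∘ σ) := by
      simp only [detElem_eq_sum_mulMulti, map_sum, Units.smul_def, map_zsmul]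
      exact Finset.sum_congr rfl fun τ _ ↦
        congrArg _ (symmetrizedTensor_mulMulti_tmul r s p (q ∘ τ))
    _ = ∑ σ : Equiv.Perm (Fin 3), ∑ τ : Equiv.Perm (Fin 3),
          (Equiv.Perm.sign σ • r (p ∘ σ)) ⊗ₜ[R] (Equiv.Perm.sign τ • s (q ∘ τ)) := by
      simp only [Finset.smul_sum]
      rw [Finset.sum_comm]
      exact Finset.sum_congr rfl fun σ _ ↦ hsum σ
    _ = _ := by
      simp only [MultilinearMap.alternatization_apply, TensorProduct.sum_tmul,
        TensorProduct.tmul_sum]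
      exact Finset.sum_comm

end Symmetrization

lemma detMap_injective [Module.Projective R P] [Module.Projective R Q] :
    Function.Injective (detMap R P Q) := by
  obtain ⟨r, hr⟩ := exists_alternatization_eq_ιMulti (R := R) (M := P) 3
  obtain ⟨s, hs⟩ := exists_alternatization_eq_ιMulti (R := R) (M := Q) 3
  have hleft : symmetrizedTensor r s ∘ₗ detMap R P Q = LinearMap.id :=
    exteriorPower_tensorProduct_ext (X := (⋀[R]^3 P) ⊗[R] (⋀[R]^3 Q)) fun p q ↦ by
      rw [LinearMap.comp_apply, detMap_ιMulti_tmul_ιMulti, symmetrizedTensor_detElem, hr, hs]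
      rfl
  exact Function.LeftInverse.injective (LinearMap.congr_fun hleft)

variable (R P Q) in
/-- The first graded piece `M₍₃₎ ≃ Λ³P ⊗ Λ³Q` of the filtration. -/
noncomputable def m3EquivExteriorPower [Module.Projective R P] [Module.Projective R Q] :
    M3 R P Q ≃ₗ[R] (⋀[R]^3 P) ⊗[R] (⋀[R]^3 Q) :=
  LinearEquiv.ofEq _ _ (range_detMap R P Q).symm ≪≫ₗ
    (LinearEquiv.ofInjective _ detMap_injective).symm

end Determinants

section TopQuotient

variable (R P Q : Type u) [CommRing R] [AddCommGroup P] [Module R P] [AddCommGroup Q] [Module R Q]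

open SymCube (mul)

/-- The quotient map `Sym³(P ⊗ Q) → Sym³ P ⊗ Sym³ Q`. -/
noncomputable def symCubeTensorProj : SymCube R (P ⊗[R] Q) →ₗ[R] SymCube R P ⊗[R] SymCube R Q :=
  SymCube.liftTensor (TensorProduct.map (sq3 R P).mkQ (sq3 R Q).mkQ)
    (fun a b c x y z ↦ congrArg₂ (· ⊗ₜ[R] ·) (SymCube.mul_swap₁₂ a b c) (SymCube.mul_swap₁₂ x y z))
    (fun a b c x y z ↦ congrArg₂ (· ⊗ₜ[R] ·) (SymCube.mul_swap₂₃ a b c) (SymCube.mul_swap₂₃ x y z))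

lemma M21_le_ker_symCubeTensorProj : M21 R P Q ≤ LinearMap.ker (symCubeTensorProj R P Q) := by
  rw [M21_eq_span_det2Elem, Submodule.span_le]
  rintro _ ⟨a, b, c, x, y, z, rfl⟩
  change mul R a b c ⊗ₜ[R] mul R x y z - mul R a b c ⊗ₜ[R] mul R y x z = 0
  rw [SymCube.mul_swap₁₂ x y z, sub_self]

variable {R P Q}

lemma mkQ_M21_mul_swap₁₂ (a b c : P) (x y z : Q) :
    (M21 R P Q).mkQ (mul R (a ⊗ₜ x) (b ⊗ₜ y) (c ⊗ₜ z)) =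
      (M21 R P Q).mkQ (mul R (a ⊗ₜ y) (b ⊗ₜ x) (c ⊗ₜ z)) :=
  (Submodule.Quotient.eq _).2 (det2Elem_mem_M21 a b c x y z)

lemma mkQ_M21_mul_swap₂₃ (a b c : P) (x y z : Q) :
    (M21 R P Q).mkQ (mul R (a ⊗ₜ x) (b ⊗ₜ y) (c ⊗ₜ z)) =
      (M21 R P Q).mkQ (mul R (a ⊗ₜ x) (b ⊗ₜ z) (c ⊗ₜ y)) := by
  rw [SymCube.mul_rotate, mkQ_M21_mul_swap₁₂, ← SymCube.mul_rotate]

variable (R P Q)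

/-- The map `p₁p₂p₃ ⊗ q₁q₂q₃ ↦ (p₁ ⊗ q₁)(p₂ ⊗ q₂)(p₃ ⊗ q₃)` modulo `2 × 2` minors, inverse to the
map induced by `symCubeTensorProj`. -/
noncomputable def symCubeTensorSection :
    SymCube R P ⊗[R] SymCube R Q →ₗ[R] SymCube R (P ⊗[R] Q) ⧸ M21 R P Q :=
  TensorProduct.lift <| LinearMap.liftQ₂ _ _
    ((SymCube.tensorMul R P Q).compr₂ (M21 R P Q).mkQ)
    (Submodule.span_le.2 (by
      rintro _ (⟨a, b, c, rfl⟩ | ⟨a, b, c, rfl⟩)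
      · rw [SetLike.mem_coe, LinearMap.mem_ker, map_sub, sub_eq_zero]
        ext x y z
        exact (mkQ_M21_mul_swap₁₂ a b c x y z).trans
          (congrArg (M21 R P Q).mkQ (SymCube.mul_swap₁₂ (a ⊗ₜ y) (b ⊗ₜ x) (c ⊗ₜ z)))
      · rw [SetLike.mem_coe, LinearMap.mem_ker, map_sub, sub_eq_zero]
        ext x y z
        exact (mkQ_M21_mul_swap₂₃ a b c x y z).trans
          (congrArg (M21 R P Q).mkQ (SymCube.mul_swap₂₃ (a ⊗ₜ x) (b ⊗ₜ z) (c ⊗ₜ y)))))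
    (Submodule.span_le.2 (by
      rintro _ (⟨x, y, z, rfl⟩ | ⟨x, y, z, rfl⟩)
      · rw [SetLike.mem_coe, LinearMap.mem_ker, map_sub, sub_eq_zero]
        ext a b c
        exact mkQ_M21_mul_swap₁₂ a b c x y z
      · rw [SetLike.mem_coe, LinearMap.mem_ker, map_sub, sub_eq_zero]
        ext a b c
        exact mkQ_M21_mul_swap₂₃ a b c x y z))

/-- The last graded piece `Sym³(P ⊗ Q) / M₍₂,₁₎ ≃ Sym³ P ⊗ Sym³ Q` of the filtration. -/
noncomputable def quotM21EquivSymCube :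
    (SymCube R (P ⊗[R] Q) ⧸ M21 R P Q) ≃ₗ[R] SymCube R P ⊗[R] SymCube R Q :=
  LinearEquiv.ofLinearMap
    (Submodule.liftQ _ (symCubeTensorProj R P Q) (M21_le_ker_symCubeTensorProj R P Q))
    (symCubeTensorSection R P Q)
    (quotTensorCube_ext fun a b c x y z ↦ rfl)
    (by ext a x b y c z; rfl)

end TopQuotient

section SchurFunctor

variable {R : Type*} [CommRing R]
variable {M N : Type*} [AddCommGroup M] [Module R M] [AddCommGroup N] [Module R N]

variable (R M) in
/-- The relations defining the Schur functor of shape `(2,1)` as the quotient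
`(Λ²M ⊗ M) / Λ³M` of `M^{⊗3}`. -/
def schurRel : Submodule R (M ⊗[R] (M ⊗[R] M)) :=
  Submodule.span R ({x | ∃ a c : M, x = a ⊗ₜ (a ⊗ₜ c)} ∪
    {x | ∃ a b c : M, x = a ⊗ₜ (b ⊗ₜ c) + b ⊗ₜ (c ⊗ₜ a) + c ⊗ₜ (a ⊗ₜ b)})

variable (R M) in
/-- The Schur functor of shape `(2,1)` presented as the quotient `(Λ²M ⊗ M) / Λ³M`; for projective
`M` the Koszul map identifies it with the kernel `SchurL31`. -/
abbrev SchurQuot := (M ⊗[R] (M ⊗[R] M)) ⧸ schurRel R M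

namespace SchurQuot

variable (R) in
/-- The class of `(a ∧ b) ⊗ c` in `(Λ²M ⊗ M) / Λ³M`. -/
def mk (a b c : M) : SchurQuot R M := Submodule.Quotient.mk (a ⊗ₜ[R] (b ⊗ₜ[R] c))

lemma mk_self (a c : M) : mk R a a c = 0 :=
  (Submodule.Quotient.mk_eq_zero _).2 (Submodule.subset_span (Or.inl ⟨a, c, rfl⟩))

lemma mk_add_mk_add_mk (a b c : M) : mk R a b c + mk R b c a + mk R c a b = 0 :=
  (Submodule.Quotient.mk_eq_zero _).2 (Submodule.subset_span (Or.inr ⟨a, b, c, rfl⟩))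

lemma mk_swap (a b c : M) : mk R a b c = -mk R b a c := by
  have hadd (x y u : M) : mk R (x + y) u c = mk R x u c + mk R y u c := by
    simp [mk, TensorProduct.add_tmul]
  have hadd' (x y u : M) : mk R u (x + y) c = mk R u x c + mk R u y c := by
    simp [mk, TensorProduct.add_tmul, TensorProduct.tmul_add]
  have h := mk_self (R := R) (a + b) c
  rw [hadd, hadd', hadd', mk_self, mk_self, zero_add, add_zero] at h
  exact eq_neg_of_add_eq_zero_left h

/-- Functoriality of `M ↦ (Λ²M ⊗ M) / Λ³M`. -/
noncomputable def map (f : M →ₗ[R] N) : SchurQuot R M →ₗ[R] SchurQuot R N :=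
  Submodule.mapQ _ _ (TensorProduct.map f (TensorProduct.map f f)) (Submodule.span_le.2 (by
    rintro _ (⟨a, c, rfl⟩ | ⟨a, b, c, rfl⟩) <;>
      simp only [SetLike.mem_coe, Submodule.mem_comap, map_add, TensorProduct.map_tmul]
    · exact Submodule.subset_span (Or.inl ⟨f a, f c, rfl⟩)
    · exact Submodule.subset_span (Or.inr ⟨f a, f b, f c, rfl⟩)))

variable (R M) in
/-- The Koszul map `(a ∧ b) ⊗ c ↦ a ⊗ bc - b ⊗ ac` into `M ⊗ Sym² M`. -/
noncomputable def koszul : SchurQuot R M →ₗ[R] M ⊗[R] SymSq R M :=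
  Submodule.liftQ _ ((sq2 R M).mkQ.lTensor M ∘ₗ
    (LinearMap.id - (TensorProduct.leftComm R M M M).toLinearMap)) (Submodule.span_le.2 (by
      rintro _ (⟨a, c, rfl⟩ | ⟨a, b, c, rfl⟩)
      · simp
      · rw [SetLike.mem_coe, LinearMap.mem_ker, map_add, map_add]
        change (a ⊗ₜ[R] SymSq.mul R b c - b ⊗ₜ[R] SymSq.mul R a c) +
          (b ⊗ₜ[R] SymSq.mul R c a - c ⊗ₜ[R] SymSq.mul R b a) +
          (c ⊗ₜ[R] SymSq.mul R a b - a ⊗ₜ[R] SymSq.mul R c b) = 0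
        rw [SymSq.mul_comm c a, SymSq.mul_comm b a, SymSq.mul_comm c b]
        abel))

lemma koszul_mk (a b c : M) :
    koszul R M (mk R a b c) = a ⊗ₜ SymSq.mul R b c - b ⊗ₜ SymSq.mul R a c :=
  rfl

lemma koszul_comp_map (f : M →ₗ[R] N) :
    koszul R N ∘ₗ map f = TensorProduct.map f (symSqMap f) ∘ₗ koszul R M := by
  ext a b c
  change koszul R N (mk R (f a) (f b) (f c)) =
    TensorProduct.map f (symSqMap f) (koszul R M (mk R a b c))
  rw [koszul_mk, koszul_mk, map_sub]
  rfl

lemma range_koszul : LinearMap.range (koszul R M) = SchurL31 (R := R) (M := M) := by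
  apply le_antisymm
  · have h : symMul R ∘ₗ koszul R M = 0 := by
      ext a b c
      change symMul R (koszul R M (mk R a b c)) = 0
      rw [koszul_mk, map_sub, sub_eq_zero]
      exact SymCube.mul_swap₁₂ a b c
    exact LinearMap.range_le_ker_iff.2 h
  · intro x hx
    have hsymMul : symMul R ∘ₗ (sq2 R M).mkQ.lTensor M = (sq3 R M).mkQ := by
      ext a b c
      rfl
    obtain ⟨t, rfl⟩ := LinearMap.lTensor_surjective M (sq2 R M).mkQ_surjective x
    have ht : t ∈ sq3 R M := by
      rw [← (sq3 R M).ker_mkQ, ← hsymMul]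
      exact hx
    have hle : sq3 R M ≤
        (LinearMap.range (koszul R M)).comap ((sq2 R M).mkQ.lTensor M) := by
      refine Submodule.span_le.2 ?_
      rintro _ (⟨a, b, c, rfl⟩ | ⟨a, b, c, rfl⟩)
      · exact ⟨mk R a b c, by rw [koszul_mk, map_sub]; rfl⟩
      · refine ⟨0, ?_⟩
        rw [map_zero, map_sub, eq_comm, sub_eq_zero]
        exact congrArg (a ⊗ₜ ·) (SymSq.mul_comm b c)
    exact hle ht

lemma exists_leftInverse_koszul_of_basis {ι : Type*} (b : Module.Basis ι R M) :
    ∃ ρ : M ⊗[R] SymSq R M →ₗ[R] SchurQuot R M, ρ ∘ₗ koszul R M = LinearMap.id := by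
  classical
  let : LinearOrder ι := linearOrderOfSTO WellOrderingRel
  set g : ι → ι → ι → SchurQuot R M := fun i j k ↦
    if i ≤ min j k then 0 else mk R (b i) (b (min j k)) (b (max j k)) with hg
  choose f hf using fun i ↦ SymSq.exists_linearMap_of_basis b (g i) fun j k ↦ by
    simp only [hg, min_comm, max_comm]
  set ρ := TensorProduct.lift (b.constr R f)
  have hρ (i j k : ι) : ρ (koszul R M (mk R (b i) (b j) (b k))) = g i j k - g j i k := by
    simp [koszul_mk, ρ, hf]
  have hlt {i j : ι} (hij : i < j) (k : ι) : g i j k - g j i k = mk R (b i) (b j) (b k) := by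
    rcases le_or_gt i k with hik | hki
    · have hi : g i j k = 0 := if_pos (le_min hij.le hik)
      have hj : g j i k = mk R (b j) (b i) (b k) := by
        simp [hg, hij.not_ge, min_eq_left hik, max_eq_right hik]
      rw [hi, hj, zero_sub, ← mk_swap]
    · have hkj := hki.trans hij
      have hi : g i j k = mk R (b i) (b k) (b j) := by
        simp [hg, hki.not_ge, min_eq_right hkj.le, max_eq_left hkj.le]
      have hj : g j i k = mk R (b j) (b k) (b i) := by
        simp [hg, hkj.not_ge, min_eq_right hki.le, max_eq_left hki.le]
      rw [hi, hj, mk_swap (b i) (b k), sub_eq_iff_eq_add, eq_comm, ← sub_eq_zero, sub_neg_eq_add]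
      exact mk_add_mk_add_mk (b i) (b j) (b k)
  refine ⟨ρ, Submodule.linearMap_qext _
    ((b.tensorProduct (b.tensorProduct b)).ext fun ⟨i, j, k⟩ ↦ ?_)⟩
  have hijk : ρ (koszul R M (mk R (b i) (b j) (b k))) = mk R (b i) (b j) (b k) := by
    rw [hρ]
    rcases lt_trichotomy i j with hij | rfl | hji
    · exact hlt hij k
    · rw [sub_self, mk_self]
    · rw [← neg_sub, hlt hji, ← mk_swap]
  rw [Module.Basis.tensorProduct_apply, Module.Basis.tensorProduct_apply]
  exact hijk

lemma exists_leftInverse_koszul [Module.Projective R M] :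
    ∃ ρ : M ⊗[R] SymSq R M →ₗ[R] SchurQuot R M, ρ ∘ₗ koszul R M = LinearMap.id := by
  obtain ⟨s, hs⟩ := Module.projective_def'.1 ‹Module.Projective R M›
  obtain ⟨ρ, hρ⟩ := exists_leftInverse_koszul_of_basis (Finsupp.basisSingleOne (R := R) (ι := M))
  set π := Finsupp.linearCombination R (id : M → M)
  have hmap : map π ∘ₗ map s = LinearMap.id := by
    ext a b c
    change mk R ((π ∘ₗ s) a) ((π ∘ₗ s) b) ((π ∘ₗ s) c) = mk R a b c
    rw [hs]
    rfl
  refine ⟨map π ∘ₗ ρ ∘ₗ TensorProduct.map s (symSqMap s), ?_⟩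
  calc (map π ∘ₗ ρ ∘ₗ TensorProduct.map s (symSqMap s)) ∘ₗ koszul R M
    _ = map π ∘ₗ (ρ ∘ₗ koszul R _) ∘ₗ map s := by
      simp only [LinearMap.comp_assoc, koszul_comp_map]
    _ = LinearMap.id := by rw [hρ, LinearMap.id_comp, hmap]

variable (R M) in
/-- The Koszul map as an isomorphism between the two descriptions of the Schur functor. -/
noncomputable def equivSchurL31 [Module.Projective R M] :
    SchurQuot R M ≃ₗ[R] SchurL31 (R := R) (M := M) :=
  LinearEquiv.ofInjective (koszul R M) (by
    obtain ⟨ρ, hρ⟩ := exists_leftInverse_koszul (R := R) (M := M)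
    exact Function.LeftInverse.injective (LinearMap.congr_fun hρ)) ≪≫ₗ
    LinearEquiv.ofEq _ _ range_koszul

end SchurQuot

end SchurFunctor

section MiddleQuotient

variable {R P Q : Type u} [CommRing R] [AddCommGroup P] [Module R P] [AddCommGroup Q] [Module R Q]

open SymCube (mul)

variable (R P Q) in
/-- The polarization `(a ⊗ x)(b ⊗ y)(c ⊗ z) ↦ a ⊗ bc ⊗ x ⊗ yz + b ⊗ ac ⊗ y ⊗ xz + c ⊗ ab ⊗ z ⊗ xy`,
which turns the map `det2Quot` given by `2 × 2` minors into a tensor product of Koszul maps. -/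
noncomputable def polarization :
    SymCube R (P ⊗[R] Q) →ₗ[R] (P ⊗[R] SymSq R P) ⊗[R] (Q ⊗[R] SymSq R Q) :=
  SymCube.liftTensor
    (TensorProduct.map ((sq2 R P).mkQ.lTensor P) ((sq2 R Q).mkQ.lTensor Q) ∘ₗ
      (LinearMap.id +
        TensorProduct.map (TensorProduct.leftComm R P P P).toLinearMap
          (TensorProduct.leftComm R Q Q Q).toLinearMap +
        TensorProduct.map
          ((TensorProduct.leftComm R P P P).toLinearMap ∘ₗ
            (TensorProduct.comm R P P).toLinearMap.lTensor P)
          ((TensorProduct.leftComm R Q Q Q).toLinearMap ∘ₗ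
            (TensorProduct.comm R Q Q).toLinearMap.lTensor Q)))
    (fun a b c x y z ↦ by
      change (a ⊗ₜ[R] SymSq.mul R b c) ⊗ₜ[R] (x ⊗ₜ[R] SymSq.mul R y z) +
          (b ⊗ₜ[R] SymSq.mul R a c) ⊗ₜ[R] (y ⊗ₜ[R] SymSq.mul R x z) +
          (c ⊗ₜ[R] SymSq.mul R a b) ⊗ₜ[R] (z ⊗ₜ[R] SymSq.mul R x y) =
        (b ⊗ₜ[R] SymSq.mul R a c) ⊗ₜ[R] (y ⊗ₜ[R] SymSq.mul R x z) +
          (a ⊗ₜ[R] SymSq.mul R b c) ⊗ₜ[R] (x ⊗ₜ[R] SymSq.mul R y z) +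
          (c ⊗ₜ[R] SymSq.mul R b a) ⊗ₜ[R] (z ⊗ₜ[R] SymSq.mul R y x)
      rw [SymSq.mul_comm b a, SymSq.mul_comm y x]
      abel)
    (fun a b c x y z ↦ by
      change (a ⊗ₜ[R] SymSq.mul R b c) ⊗ₜ[R] (x ⊗ₜ[R] SymSq.mul R y z) +
          (b ⊗ₜ[R] SymSq.mul R a c) ⊗ₜ[R] (y ⊗ₜ[R] SymSq.mul R x z) +
          (c ⊗ₜ[R] SymSq.mul R a b) ⊗ₜ[R] (z ⊗ₜ[R] SymSq.mul R x y) =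
        (a ⊗ₜ[R] SymSq.mul R c b) ⊗ₜ[R] (x ⊗ₜ[R] SymSq.mul R z y) +
          (c ⊗ₜ[R] SymSq.mul R a b) ⊗ₜ[R] (z ⊗ₜ[R] SymSq.mul R x y) +
          (b ⊗ₜ[R] SymSq.mul R a c) ⊗ₜ[R] (y ⊗ₜ[R] SymSq.mul R x z)
      rw [SymSq.mul_comm c b, SymSq.mul_comm z y]
      abel)

lemma polarization_mul_tmul (a b c : P) (x y z : Q) :
    polarization R P Q (mul R (a ⊗ₜ x) (b ⊗ₜ y) (c ⊗ₜ z)) =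
      (a ⊗ₜ SymSq.mul R b c) ⊗ₜ (x ⊗ₜ SymSq.mul R y z) +
        (b ⊗ₜ SymSq.mul R a c) ⊗ₜ (y ⊗ₜ SymSq.mul R x z) +
        (c ⊗ₜ SymSq.mul R a b) ⊗ₜ (z ⊗ₜ SymSq.mul R x y) := rfl

lemma polarization_det2Elem (a b c : P) (x y z : Q) :
    polarization R P Q (det2Elem R P Q a b c x y z) =
      SchurQuot.koszul R P (SchurQuot.mk R a b c) ⊗ₜ
        SchurQuot.koszul R Q (SchurQuot.mk R x y z) := by
  rw [det2Elem_eq_mul_sub_mul, map_sub, polarization_mul_tmul, polarization_mul_tmul,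
    SchurQuot.koszul_mk, SchurQuot.koszul_mk, SymSq.mul_comm y x]
  simp only [TensorProduct.sub_tmul, TensorProduct.tmul_sub]
  abel

variable (R P Q) in
lemma M3_le_ker_polarization : M3 R P Q ≤ LinearMap.ker (polarization R P Q) := by
  rw [M3, Submodule.span_le]
  rintro _ ⟨p, q, rfl⟩
  rw [SetLike.mem_coe, LinearMap.mem_ker, detElem_eq_sum_det2Elem_left]
  simp only [map_add, polarization_det2Elem]
  rw [← TensorProduct.add_tmul, ← TensorProduct.add_tmul, ← map_add, ← map_add,
    SchurQuot.mk_add_mk_add_mk, map_zero, TensorProduct.zero_tmul]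

variable (R P Q) in
/-- The map `P^{⊗3} × Q^{⊗3} → Sym³(P ⊗ Q)` given on pure tensors by `det2Elem`. -/
noncomputable def det2Bilin :
    P ⊗[R] (P ⊗[R] P) →ₗ[R] Q ⊗[R] (Q ⊗[R] Q) →ₗ[R] SymCube R (P ⊗[R] Q) :=
  SymCube.tensorMul R P Q -
    (SymCube.tensorMul R P Q).compl₂ (TensorProduct.leftComm R Q Q Q).toLinearMap

lemma mkQ_M3_sum_det2Elem_left (a b c : P) (x y z : Q) :
    (M3 R P Q).mkQ (det2Elem R P Q a b c x y z + det2Elem R P Q b c a x y z +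
      det2Elem R P Q c a b x y z) = 0 :=
  (Submodule.Quotient.mk_eq_zero _).2
    (detElem_eq_sum_det2Elem_left (R := R) ![a, b, c] ![x, y, z] ▸ detElem_mem_M3 _ _)

lemma mkQ_M3_sum_det2Elem_right (a b c : P) (x y z : Q) :
    (M3 R P Q).mkQ (det2Elem R P Q a b c x y z + det2Elem R P Q a b c y z x +
      det2Elem R P Q a b c z x y) = 0 :=
  (Submodule.Quotient.mk_eq_zero _).2
    (detElem_eq_sum_det2Elem_right (R := R) ![a, b, c] ![x, y, z] ▸ detElem_mem_M3 _ _)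

variable (R P Q) in
/-- The map `((Λ²P ⊗ P) / Λ³P) ⊗ ((Λ²Q ⊗ Q) / Λ³Q) → Sym³(P ⊗ Q) / M₍₃₎` induced by `det2Elem`. -/
noncomputable def det2Quot :
    SchurQuot R P ⊗[R] SchurQuot R Q →ₗ[R] SymCube R (P ⊗[R] Q) ⧸ M3 R P Q :=
  TensorProduct.lift <| LinearMap.liftQ₂ _ _ ((det2Bilin R P Q).compr₂ (M3 R P Q).mkQ)
    (Submodule.span_le.2 (by
      rintro _ (⟨a, c, rfl⟩ | ⟨a, b, c, rfl⟩) <;> rw [SetLike.mem_coe, LinearMap.mem_ker]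
      · ext x y z
        exact congrArg (M3 R P Q).mkQ (det2Elem_self_left a c x y z)
      · rw [map_add, map_add]
        ext x y z
        exact mkQ_M3_sum_det2Elem_left a b c x y z))
    (Submodule.span_le.2 (by
      rintro _ (⟨x, z, rfl⟩ | ⟨x, y, z, rfl⟩) <;> rw [SetLike.mem_coe, LinearMap.mem_ker]
      · ext a b c
        exact congrArg (M3 R P Q).mkQ (det2Elem_self_right a b c x z)
      · rw [map_add, map_add]
        ext a b c
        exact mkQ_M3_sum_det2Elem_right a b c x y z))

lemma det2Quot_mk_tmul_mk (a b c : P) (x y z : Q) :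
    det2Quot R P Q (SchurQuot.mk R a b c ⊗ₜ SchurQuot.mk R x y z) =
      (M3 R P Q).mkQ (det2Elem R P Q a b c x y z) := rfl

variable (R P Q) in
lemma range_det2Quot : LinearMap.range (det2Quot R P Q) = (M21 R P Q).map (M3 R P Q).mkQ := by
  apply le_antisymm
  · have h : ((M21 R P Q).map (M3 R P Q).mkQ).mkQ ∘ₗ det2Quot R P Q = 0 :=
      quotTensorCube_ext fun a b c x y z ↦ (Submodule.Quotient.mk_eq_zero _).2
        (Submodule.mem_map_of_mem (det2Elem_mem_M21 a b c x y z))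
    rw [← Submodule.ker_mkQ ((M21 R P Q).map (M3 R P Q).mkQ)]
    exact LinearMap.range_le_ker_iff.2 h
  · rw [M21_eq_span_det2Elem, Submodule.map_span_le]
    rintro _ ⟨a, b, c, x, y, z, rfl⟩
    exact ⟨_, det2Quot_mk_tmul_mk a b c x y z⟩

lemma det2Quot_injective [Module.Projective R P] [Module.Projective R Q] :
    Function.Injective (det2Quot R P Q) := by
  obtain ⟨r, hr⟩ := SchurQuot.exists_leftInverse_koszul (R := R) (M := P)
  obtain ⟨s, hs⟩ := SchurQuot.exists_leftInverse_koszul (R := R) (M := Q)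
  let φ := Submodule.liftQ _ (polarization R P Q) (M3_le_ker_polarization R P Q)
  have hφ : φ ∘ₗ det2Quot R P Q =
      TensorProduct.map (SchurQuot.koszul R P) (SchurQuot.koszul R Q) :=
    quotTensorCube_ext polarization_det2Elem
  have hleft : (TensorProduct.map r s ∘ₗ φ) ∘ₗ det2Quot R P Q = LinearMap.id := by
    rw [LinearMap.comp_assoc, hφ, ← TensorProduct.map_comp, hr, hs, TensorProduct.map_id]
  exact Function.LeftInverse.injective (g := TensorProduct.map r s ∘ₗ φ)
    (LinearMap.congr_fun hleft)

variable (R P Q) in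
/-- The middle graded piece `M₍₂,₁₎ / M₍₃₎ ≃ L³₁P ⊗ L³₁Q` of the filtration. -/
noncomputable def m21QuotM3EquivSchurL31 [Module.Projective R P] [Module.Projective R Q] :
    (M21 R P Q ⧸ (M3 R P Q).comap (M21 R P Q).subtype) ≃ₗ[R]
      SchurL31 (R := R) (M := P) ⊗[R] SchurL31 (R := R) (M := Q) :=
  let g : M21 R P Q →ₗ[R] SymCube R (P ⊗[R] Q) ⧸ M3 R P Q :=
    (M3 R P Q).mkQ ∘ₗ (M21 R P Q).subtype
  have hker : (M3 R P Q).comap (M21 R P Q).subtype = LinearMap.ker g := by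
    rw [LinearMap.ker_comp, Submodule.ker_mkQ]
  have hrange : LinearMap.range g = LinearMap.range (det2Quot R P Q) := by
    rw [range_det2Quot, LinearMap.range_comp, Submodule.range_subtype]
  Submodule.quotEquivOfEq _ _ hker ≪≫ₗ g.quotKerEquivRange ≪≫ₗ LinearEquiv.ofEq _ _ hrange ≪≫ₗ
    (LinearEquiv.ofInjective _ det2Quot_injective).symm ≪≫ₗ
    TensorProduct.congr (SchurQuot.equivSchurL31 R P) (SchurQuot.equivSchurL31 R Q)

end MiddleQuotient

theorem cauchy_filtration_sym3_general (R P Q : Type u) [CommRing R]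
    [AddCommGroup P] [Module R P] [Module.Projective R P]
    [AddCommGroup Q] [Module R Q] [Module.Projective R Q] :
    M3 R P Q ≤ M21 R P Q ∧
    Nonempty ((M3 R P Q) ≃ₗ[R] ((⋀[R]^3 P) ⊗[R] (⋀[R]^3 Q))) ∧
    Nonempty ((M21 R P Q ⧸ Submodule.comap (M21 R P Q).subtype (M3 R P Q)) ≃ₗ[R]
      ((SchurL31 (R := R) (M := P)) ⊗[R] (SchurL31 (R := R) (M := Q)))) ∧
    Nonempty ((SymCube R (P ⊗[R] Q) ⧸ M21 R P Q) ≃ₗ[R]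
      (SymCube R P ⊗[R] SymCube R Q)) :=
  ⟨le_sup_left, ⟨m3EquivExteriorPower R P Q⟩, ⟨m21QuotM3EquivSchurL31 R P Q⟩,
    ⟨quotM21EquivSymCube R P Q⟩⟩

/-- for finitely generated projective modules `P`, `Q` over a commutative
ring `R`, the Cauchy filtration `0 ⊆ M₍₃₎ ⊆ M₍₂,₁₎ ⊆ Sym³(P ⊗ Q)` (where `M₍₃₎` is the
image of the determinant map `Λ³P ⊗ Λ³Q → Sym³(P ⊗ Q)`) has graded pieces given by the
short exact sequences `0 → Λ³P ⊗ Λ³Q → M₍₂,₁₎ → L³₁P ⊗ L³₁Q → 0` and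
`0 → M₍₂,₁₎ → Sym³(P ⊗ Q) → Sym³P ⊗ Sym³Q → 0`; equivalently `M₍₃₎ ≅ Λ³P ⊗ Λ³Q`,
`M₍₂,₁₎/M₍₃₎ ≅ L³₁P ⊗ L³₁Q` and `Sym³(P ⊗ Q)/M₍₂,₁₎ ≅ Sym³P ⊗ Sym³Q`. -/
theorem cauchy_filtration_sym3 (R P Q : Type u) [CommRing R]
    [AddCommGroup P] [Module R P] [Module.Finite R P] [Module.Projective R P]
    [AddCommGroup Q] [Module R Q] [Module.Finite R Q] [Module.Projective R Q] :
    M3 R P Q ≤ M21 R P Q ∧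
    Nonempty ((M3 R P Q) ≃ₗ[R] ((⋀[R]^3 P) ⊗[R] (⋀[R]^3 Q))) ∧
    Nonempty ((M21 R P Q ⧸ Submodule.comap (M21 R P Q).subtype (M3 R P Q)) ≃ₗ[R]
      ((SchurL31 (R := R) (M := P)) ⊗[R] (SchurL31 (R := R) (M := Q)))) ∧
    Nonempty ((SymCube R (P ⊗[R] Q) ⧸ M21 R P Q) ≃ₗ[R]
      (SymCube R P ⊗[R] SymCube R Q)) :=
  cauchy_filtration_sym3_general R P Q
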